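/- Under (A1)–(A4), suppose T ≥ 1, the initial action satisfies g(x_1) ≤ −α for some α ∈ (0, ε], and the algorithm is run with parameters ρ = α/√T and η = ξ·ρ/(G_f·G_g). Then for every point x* with g(x*) ≤ 0: ∑_{t=1}^T (f_t(x_t) − f_t(x*)) ≤ ( 2·G_f·G_g·R²/(ξ·α) + G_f·ξ·α/(2·G_g) + G_f·α/σ )·√T. -/

import Mathlib

open scoped RealInnerProductSpace Classical

noncomputable def projBall {d : ℕ} (R : ℝ) (v : EuclideanSpace ℝ (Fin d)) :
    EuclideanSpace ℝ (Fin d) := (R / max R ‖v‖) • v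

def IsSubgradAt {d : ℕ} (g : EuclideanSpace ℝ (Fin d) → ℝ)
    (x s : EuclideanSpace ℝ (Fin d)) : Prop :=
  ∀ y, g x + ⟪s, y - x⟫ ≤ g y

/-!
Both corrections made after the gradient step are metric projections: onto a half-space containing
`{g ≤ -ρ}`, by the subgradient inequality, and onto the ball. Hence they never increase the distance
to a comparator `u` with `g u ≤ -ρ`, and the telescoping argument for online gradient descent bounds
the regret against `u`.

A comparator `w` with `g w ≤ 0` is within `ρ / σ` of such a `u`. Indeed, if `z` is the projection of
`w` onto `{g ≤ -ε}`, then `g ≥ -ε` on the half-space supporting this set at `z`, so a Lagrange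
multiplier makes some `l • (w - z)` a subgradient of `g` at `z`. Its norm is at least `σ`, so `g`
falls at average rate at least `σ` from `w` to `z`, and by convexity at least as fast over the
initial part of this segment, where `u` is found.
-/

section Projections

variable {E : Type*} [NormedAddCommGroup E] [InnerProductSpace ℝ E]

/-- The metric projection onto the closed ball of radius `R` about the origin; `projBall` is the
case of `EuclideanSpace ℝ (Fin d)`. -/
noncomputable def ballProj (R : ℝ) (v : E) : E := (R / max R ‖v‖) • v

/-- The metric projection of `y` onto the half-space `{u | a + ⟪s, u - y⟫ ≤ 0}`, as used in a Polyak
step. For `s = 0` it returns `y`. -/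
noncomputable def polyakStep (s : E) (a : ℝ) (y : E) : E := y - (max a 0 / ‖s‖ ^ 2) • s

theorem polyakStep_zero_left (a : ℝ) (y : E) : polyakStep 0 a y = y := by
  rw [polyakStep, smul_zero, sub_zero]

theorem norm_sub_le_norm_sub_of_inner_nonpos {v p u : E} (h : ⟪v - p, u - p⟫ ≤ 0) :
    ‖p - u‖ ≤ ‖v - u‖ := by
  have expand : ‖v - u‖ ^ 2 = ‖v - p‖ ^ 2 - 2 * ⟪v - p, u - p⟫ + ‖p - u‖ ^ 2 := by
    rw [← sub_sub_sub_cancel_right v u p, norm_sub_sq_real, norm_sub_rev u p]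
  refine le_of_sq_le_sq ?_ (norm_nonneg _)
  linarith [sq_nonneg ‖v - p‖]

theorem norm_ballProj_le {R : ℝ} (hR : 0 ≤ R) (v : E) : ‖ballProj R v‖ ≤ R := by
  have hmax : 0 ≤ max R ‖v‖ := hR.trans (le_max_left _ _)
  rw [ballProj, norm_smul, Real.norm_of_nonneg (div_nonneg hR hmax), div_mul_eq_mul_div]
  exact div_le_of_le_mul₀ hmax hR (mul_le_mul_of_nonneg_left (le_max_right _ _) hR)

theorem ballProj_of_norm_le {R : ℝ} {v : E} (h : ‖v‖ ≤ R) : ballProj R v = v := by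
  rcases ((norm_nonneg v).trans h).eq_or_lt with rfl | hR
  · simp [ballProj, norm_le_zero_iff.mp h]
  · rw [ballProj, max_eq_left h, div_self hR.ne', one_smul]

theorem norm_ballProj_sub_le {R : ℝ} {u : E} (hu : ‖u‖ ≤ R) (v : E) :
    ‖ballProj R v - u‖ ≤ ‖v - u‖ := by
  rcases le_or_gt ‖v‖ R with h | h
  · rw [ballProj_of_norm_le h]
  have hv : 0 < ‖v‖ := ((norm_nonneg u).trans hu).trans_lt h
  have hproj : ballProj R v = (R / ‖v‖) • v := by rw [ballProj, max_eq_right h.le]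
  have hratio : 0 ≤ 1 - R / ‖v‖ := sub_nonneg.mpr ((div_le_one hv).mpr h.le)
  have hdiff : v - ballProj R v = (1 - R / ‖v‖) • v := by rw [hproj, sub_smul, one_smul]
  have hinner : ⟪v, u - ballProj R v⟫ ≤ 0 := calc
    ⟪v, u - ballProj R v⟫ = ⟪v, u⟫ - ‖v‖ * R := by
      rw [hproj, inner_sub_right, real_inner_smul_right, real_inner_self_eq_norm_sq]
      field_simp
    _ ≤ 0 := sub_nonpos.mpr <|
      (real_inner_le_norm v u).trans (mul_le_mul_of_nonneg_left hu hv.le)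
  apply norm_sub_le_norm_sub_of_inner_nonpos
  rw [hdiff, real_inner_smul_left]
  exact mul_nonpos_of_nonneg_of_nonpos hratio hinner

theorem norm_polyakStep_sub_le {s y u : E} {a : ℝ} (h : a + ⟪s, u - y⟫ ≤ 0) :
    ‖polyakStep s a y - u‖ ≤ ‖y - u‖ := by
  rcases eq_or_ne s 0 with rfl | hs
  · rw [polyakStep_zero_left]
  rcases le_or_gt a 0 with ha | ha
  · simp [polyakStep, max_eq_right ha]
  have hproj : polyakStep s a y = y - (a / ‖s‖ ^ 2) • s := by rw [polyakStep, max_eq_left ha.le]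
  have hinner : ⟪s, u - polyakStep s a y⟫ = a + ⟪s, u - y⟫ := by
    have hs' : ‖s‖ ≠ 0 := norm_ne_zero_iff.mpr hs
    rw [hproj, sub_sub_eq_add_sub, add_sub_right_comm, inner_add_right, real_inner_smul_right,
      real_inner_self_eq_norm_sq, div_mul_cancel₀ a (pow_ne_zero 2 hs'), add_comm]
  apply norm_sub_le_norm_sub_of_inner_nonpos
  rw [show y - polyakStep s a y = (a / ‖s‖ ^ 2) • s by rw [hproj, sub_sub_cancel],
    real_inner_smul_left, hinner]
  exact mul_nonpos_of_nonneg_of_nonpos (by positivity) h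

end Projections

section Subgradients

variable {E : Type*} [NormedAddCommGroup E] [InnerProductSpace ℝ E]

/-- `s` is a subgradient of `g` at `x`; `IsSubgradAt g x s` is the case of
`EuclideanSpace ℝ (Fin d)`. The arguments are ordered as in `HasGradientAt`. -/
def HasSubgradientAt (g : E → ℝ) (s x : E) : Prop := ∀ y, g x + ⟪s, y - x⟫ ≤ g y

theorem HasSubgradientAt.sub_le_inner {f : E → ℝ} {v x : E} (h : HasSubgradientAt f v x) (u : E) :
    f x - f u ≤ ⟪v, x - u⟫ := by
  have := h u
  rw [← neg_sub x u, inner_neg_right] at this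
  linarith

theorem HasSubgradientAt.sub_le_mul_norm {f : E → ℝ} {v x : E} {G : ℝ}
    (h : HasSubgradientAt f v x) (hv : ‖v‖ ≤ G) (u : E) : f x - f u ≤ G * ‖x - u‖ :=
  (h.sub_le_inner u).trans <|
    (real_inner_le_norm v (x - u)).trans (mul_le_mul_of_nonneg_right hv (norm_nonneg _))

theorem hasSubgradientAt_of_hasGradientAt [CompleteSpace E] {f : E → ℝ} {v x : E}
    (hf : ConvexOn ℝ Set.univ f) (hv : HasGradientAt f v x) : HasSubgradientAt f v x := by
  intro z
  have hconv : ConvexOn ℝ Set.univ (fun t : ℝ => f (AffineMap.lineMap x z t)) :=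
    hf.comp_affineMap (AffineMap.lineMap x z)
  have hderiv : HasDerivAt (fun t : ℝ => f (AffineMap.lineMap x z t)) ⟪v, z - x⟫ 0 := by
    have hfderiv : HasFDerivAt f (InnerProductSpace.toDual ℝ E v)
        (AffineMap.lineMap x z (0 : ℝ)) := by
      rw [AffineMap.lineMap_apply_zero]
      exact hv.hasFDerivAt
    exact hfderiv.comp_hasDerivAt 0 AffineMap.hasDerivAt_lineMap
  have hslope := hconv.le_slope_of_hasDerivAt (Set.mem_univ 0) (Set.mem_univ 1) one_pos hderiv
  simp only [slope_def_field, AffineMap.lineMap_apply_zero, AffineMap.lineMap_apply_one,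
    sub_zero, div_one] at hslope
  linarith

end Subgradients

section LagrangeMultiplier

variable {V : Type*} [AddCommGroup V] [Module ℝ V] {g : V → ℝ} {φ : V →ₗ[ℝ] ℝ} {b c : ℝ}

theorem slope_le_slope_of_le_on_hyperplane (hg : ConvexOn ℝ Set.univ g)
    (hle : ∀ u, φ u = b → c ≤ g u) {u u' : V} (hu : φ u < b) (hu' : b < φ u') :
    (c - g u) / (b - φ u) ≤ (g u' - c) / (φ u' - b) := by
  have hp : 0 < b - φ u := sub_pos.mpr hu
  have hq : 0 < φ u' - b := sub_pos.mpr hu'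
  set p := b - φ u with hp_def
  set q := φ u' - b with hq_def
  have hpq : 0 < q + p := add_pos hq hp
  have hcross : φ ((q / (q + p)) • u + (p / (q + p)) • u') = b := by
    rw [map_add, map_smul, map_smul, smul_eq_mul, smul_eq_mul,
      show φ u = b - p by rw [hp_def]; ring, show φ u' = b + q by rw [hq_def]; ring]
    field_simp
    ring
  have hconv : c ≤ q / (q + p) * g u + p / (q + p) * g u' :=
    (hle _ hcross).trans <| hg.2 (Set.mem_univ u) (Set.mem_univ u') (by positivity) (by positivity)
      (by rw [← add_div, div_self hpq.ne'])
  have hclear : c * (q + p) ≤ q * g u + p * g u' := by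
    rwa [div_mul_eq_mul_div, div_mul_eq_mul_div, ← add_div, le_div_iff₀ hpq] at hconv
  rw [div_le_div_iff₀ hp hq]
  linarith

theorem exists_multiplier_of_le_on_halfspace (hg : ConvexOn ℝ Set.univ g)
    (hφ : ∃ u, b < φ u) (hle : ∀ u, b ≤ φ u → c ≤ g u) :
    ∃ l : ℝ, 0 ≤ l ∧ ∀ u, c + l * (φ u - b) ≤ g u := by
  let lowerSlopes : Set ℝ := insert 0 ((fun u => (c - g u) / (b - φ u)) '' {u | φ u < b})
  let upperSlopes : Set ℝ := (fun u => (g u - c) / (φ u - b)) '' {u | b < φ u}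
  have hslopes : ∀ r ∈ lowerSlopes, ∀ r' ∈ upperSlopes, r ≤ r' := by
    rintro r (rfl | ⟨u, hu, rfl⟩) _ ⟨u', hu', rfl⟩
    · exact div_nonneg (sub_nonneg.mpr (hle u' hu'.le)) (sub_nonneg.mpr hu'.le)
    · exact slope_le_slope_of_le_on_hyperplane hg (fun w hw => hle w hw.ge) hu hu'
  obtain ⟨l, hlower, hupper⟩ := exists_between_of_forall_le (Set.insert_nonempty _ _)
    (Set.Nonempty.image _ hφ : upperSlopes.Nonempty) hslopes
  refine ⟨l, hlower (Set.mem_insert _ _), fun u => ?_⟩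
  rcases lt_trichotomy (φ u) b with hu | hu | hu
  · have hl := hlower (Set.mem_insert_of_mem _ (Set.mem_image_of_mem _ hu))
    rw [div_le_iff₀ (sub_pos.mpr hu)] at hl
    linarith
  · rw [hu, sub_self, mul_zero, add_zero]
    exact hle u hu.ge
  · have hl := hupper (Set.mem_image_of_mem _ hu)
    rw [le_div_iff₀ (sub_pos.mpr hu)] at hl
    linarith

end LagrangeMultiplier

section ErrorBound

theorem le_on_closed_halfspace_of_le_on_open {V : Type*} [AddCommGroup V] [Module ℝ V]
    [TopologicalSpace V] [ContinuousAdd V] [ContinuousSMul ℝ V] {g : V → ℝ} {φ : V →L[ℝ] ℝ}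
    {b c : ℝ} (hg : Continuous g) (hφ : φ ≠ 0) (hle : ∀ u, b < φ u → c ≤ g u) {u : V}
    (hu : b ≤ φ u) : c ≤ g u := by
  have hclosure : u ∈ closure (φ ⁻¹' Set.Ioi b) := by
    rwa [← (φ.isOpenMap_of_ne_zero hφ).preimage_closure_eq_closure_preimage φ.continuous,
      closure_Ioi]
  exact closure_minimal hle (isClosed_le continuous_const hg) hclosure

variable {E : Type*} [NormedAddCommGroup E] [InnerProductSpace ℝ E] [CompleteSpace E]
  {g : E → ℝ} {c σ : ℝ}

theorem exists_mem_sublevel_forall_inner_sub_nonpos (hconv : ConvexOn ℝ Set.univ g)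
    (hcont : Continuous g) (hne : ∃ z, g z ≤ c) (w : E) :
    ∃ z, g z ≤ c ∧ ∀ u, g u ≤ c → ⟪w - z, u - z⟫ ≤ 0 := by
  have hclosed : IsClosed {u | g u ≤ c} := isClosed_le hcont continuous_const
  have hK : Convex ℝ {u | g u ≤ c} := by simpa using hconv.convex_le c
  obtain ⟨z, hz, hmin⟩ := exists_norm_eq_iInf_of_complete_convex hne hclosed.isComplete hK w
  exact ⟨z, hz, (norm_eq_iInf_iff_real_inner_le_zero hK hz).mp hmin⟩

theorem exists_hasSubgradientAt_smul_sub (hconv : ConvexOn ℝ Set.univ g) (hcont : Continuous g)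
    (hne : ∃ z, g z ≤ c) {w : E} (hw : c < g w) :
    ∃ z, ∃ l : ℝ, 0 ≤ l ∧ g z = c ∧ HasSubgradientAt g (l • (w - z)) z := by
  obtain ⟨z, hz, hsupport⟩ := exists_mem_sublevel_forall_inner_sub_nonpos hconv hcont hne w
  have hwz : w - z ≠ 0 := sub_ne_zero.mpr fun h => hw.not_ge (h ▸ hz)
  have hwpos : ⟪w - z, z⟫ < ⟪w - z, w⟫ := by
    rw [← sub_pos, ← inner_sub_right]
    exact real_inner_self_pos.mpr hwz
  have hφ : innerSL ℝ (w - z) ≠ 0 :=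
    norm_ne_zero_iff.mp (by rwa [innerSL_apply_norm, norm_ne_zero_iff])
  have hopen : ∀ u, ⟪w - z, z⟫ < innerSL ℝ (w - z) u → c ≤ g u := by
    intro u hu
    by_contra! hgu
    have := hsupport u hgu.le
    rw [inner_sub_right, sub_nonpos] at this
    exact this.not_gt hu
  have hclosed : ∀ u, ⟪w - z, z⟫ ≤ innerSL ℝ (w - z) u → c ≤ g u := fun u =>
    le_on_closed_halfspace_of_le_on_open hcont hφ hopen
  have hgz : g z = c := hz.antisymm (hclosed z le_rfl)
  obtain ⟨l, hl, hsub⟩ := exists_multiplier_of_le_on_halfspace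
    (φ := (innerSL ℝ (w - z) : E →ₗ[ℝ] ℝ)) hconv ⟨w, hwpos⟩ hclosed
  refine ⟨z, l, hl, hgz, fun u => ?_⟩
  rw [hgz, real_inner_smul_left, inner_sub_right]
  exact hsub u

theorem exists_mem_level_mul_norm_sub_le (hconv : ConvexOn ℝ Set.univ g) (hcont : Continuous g)
    (hne : ∃ z, g z ≤ c) (hσ : ∀ z s, g z = c → HasSubgradientAt g s z → σ ≤ ‖s‖) {w : E}
    (hw : c < g w) : ∃ z, g z = c ∧ σ * ‖w - z‖ ≤ g w - c := by
  obtain ⟨z, l, hl, hgz, hsub⟩ := exists_hasSubgradientAt_smul_sub hconv hcont hne hw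
  refine ⟨z, hgz, ?_⟩
  calc σ * ‖w - z‖ ≤ ‖l • (w - z)‖ * ‖w - z‖ :=
        mul_le_mul_of_nonneg_right (hσ z _ hgz hsub) (norm_nonneg _)
    _ = ⟪l • (w - z), w - z⟫ := by
        rw [norm_smul, Real.norm_of_nonneg hl, real_inner_smul_left,
          real_inner_self_eq_norm_mul_norm, mul_assoc]
    _ ≤ g w - c := by linarith [hsub w]

theorem exists_mem_sublevel_mul_norm_sub_le (hconv : ConvexOn ℝ Set.univ g) (hcont : Continuous g)
    (hne : ∃ z, g z ≤ c) (hσ : ∀ z s, g z = c → HasSubgradientAt g s z → σ ≤ ‖s‖) {b : ℝ}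
    (hcb : c ≤ b) (w : E) : ∃ u, g u ≤ b ∧ σ * ‖u - w‖ ≤ max (g w - b) 0 := by
  rcases le_or_gt (g w) b with hwb | hbw
  · exact ⟨w, hwb, by simp⟩
  have hcw : 0 < g w - c := sub_pos.mpr (hcb.trans_lt hbw)
  obtain ⟨z, hgz, hdist⟩ := exists_mem_level_mul_norm_sub_le hconv hcont hne hσ (hcb.trans_lt hbw)
  set θ := (g w - b) / (g w - c)
  have hθ_mul : θ * (g w - c) = g w - b := div_mul_cancel₀ _ hcw.ne'
  have hθ_nonneg : 0 ≤ θ := div_nonneg (sub_nonneg.mpr hbw.le) hcw.le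
  have hθ_le_one : θ ≤ 1 := (div_le_one hcw).mpr (sub_le_sub_left hcb _)
  refine ⟨(1 - θ) • w + θ • z, ?_, ?_⟩
  · calc g ((1 - θ) • w + θ • z) ≤ (1 - θ) * g w + θ * g z :=
          hconv.2 (Set.mem_univ w) (Set.mem_univ z) (sub_nonneg.mpr hθ_le_one) hθ_nonneg
            (sub_add_cancel 1 θ)
      _ = b := by rw [hgz]; linarith
  · calc σ * ‖(1 - θ) • w + θ • z - w‖ = θ * (σ * ‖w - z‖) := by
          rw [show (1 - θ) • w + θ • z - w = (-θ) • (w - z) by module, norm_smul, norm_neg,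
            Real.norm_of_nonneg hθ_nonneg, mul_left_comm]
      _ ≤ θ * (g w - c) := mul_le_mul_of_nonneg_left hdist hθ_nonneg
      _ ≤ max (g w - b) 0 := hθ_mul.le.trans (le_max_left _ _)

end ErrorBound

section Regret

variable {E : Type*} [NormedAddCommGroup E] [InnerProductSpace ℝ E]
  {T : ℕ} {R G η ρ : ℝ} {g : E → ℝ} {f : ℕ → E → ℝ} {x : ℕ → E}

theorem HasSubgradientAt.sub_le_of_norm_sub_le {f : E → ℝ} {v x x' u : E}
    (h : HasSubgradientAt f v x) (hη : 0 < η) (hv : ‖v‖ ≤ G) (hx' : ‖x' - u‖ ≤ ‖x - η • v - u‖) :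
    f x - f u ≤ (‖x - u‖ ^ 2 - ‖x' - u‖ ^ 2) / (2 * η) + η * G ^ 2 / 2 := by
  have hdist : ‖x' - u‖ ^ 2 ≤ ‖x - u‖ ^ 2 - 2 * η * ⟪v, x - u⟫ + η ^ 2 * G ^ 2 := calc
    ‖x' - u‖ ^ 2 ≤ ‖x - u - η • v‖ ^ 2 := by
      rw [sub_right_comm]
      gcongr
    _ = ‖x - u‖ ^ 2 - 2 * η * ⟪v, x - u⟫ + η ^ 2 * ‖v‖ ^ 2 := by
      rw [norm_sub_sq_real, real_inner_smul_right, real_inner_comm, norm_smul,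
        Real.norm_of_nonneg hη.le]
      ring
    _ ≤ ‖x - u‖ ^ 2 - 2 * η * ⟪v, x - u⟫ + η ^ 2 * G ^ 2 := by gcongr
  calc f x - f u ≤ ⟪v, x - u⟫ := h.sub_le_inner u
    _ = 2 * η * ⟪v, x - u⟫ / (2 * η) := by field_simp
    _ ≤ (‖x - u‖ ^ 2 - ‖x' - u‖ ^ 2 + η ^ 2 * G ^ 2) / (2 * η) := by
        gcongr
        linarith
    _ = (‖x - u‖ ^ 2 - ‖x' - u‖ ^ 2) / (2 * η) + η * G ^ 2 / 2 := by field_simp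

theorem sum_sub_le_of_norm_sub_le {v : ℕ → E} {u : E} (hη : 0 < η)
    (hf : ∀ t ∈ Finset.Icc 1 T, HasSubgradientAt (f t) (v t) (x t))
    (hv : ∀ t ∈ Finset.Icc 1 T, ‖v t‖ ≤ G)
    (hx : ∀ t ∈ Finset.Icc 1 T, ‖x (t + 1) - u‖ ≤ ‖x t - η • v t - u‖) :
    ∑ t ∈ Finset.Icc 1 T, (f t (x t) - f t u) ≤ ‖x 1 - u‖ ^ 2 / (2 * η) + η * G ^ 2 / 2 * T := by
  have htelescope : ∑ t ∈ Finset.Icc 1 T, (‖x t - u‖ ^ 2 - ‖x (t + 1) - u‖ ^ 2)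
      = ‖x 1 - u‖ ^ 2 - ‖x (T + 1) - u‖ ^ 2 := by
    have := Finset.sum_Ico_sub (fun t => -‖x t - u‖ ^ 2) (Nat.le_add_left 1 T)
    simpa only [neg_sub_neg, Finset.Ico_add_one_right_eq_Icc] using this
  calc ∑ t ∈ Finset.Icc 1 T, (f t (x t) - f t u)
      ≤ ∑ t ∈ Finset.Icc 1 T,
          ((‖x t - u‖ ^ 2 - ‖x (t + 1) - u‖ ^ 2) / (2 * η) + η * G ^ 2 / 2) :=
        Finset.sum_le_sum fun t ht => (hf t ht).sub_le_of_norm_sub_le hη (hv t ht) (hx t ht)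
    _ = (‖x 1 - u‖ ^ 2 - ‖x (T + 1) - u‖ ^ 2) / (2 * η) + η * G ^ 2 / 2 * T := by
        rw [Finset.sum_add_distrib, ← Finset.sum_div, htelescope, Finset.sum_const, Nat.card_Icc,
          Nat.add_sub_cancel, nsmul_eq_mul, mul_comm (T : ℝ)]
    _ ≤ ‖x 1 - u‖ ^ 2 / (2 * η) + η * G ^ 2 / 2 * T := by
        gcongr
        exact sub_le_self _ (sq_nonneg _)

/-- `x 1, …, x (T + 1)` are iterates of online gradient descent with Polyak feasibility steps for
the constraint `g ≤ -ρ` and step size `η`. Here `v t z` is the (sub)gradient at `z` of the cost of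
round `t`, and `s t` is the subgradient of `g` chosen at `x t`. -/
structure IsPolyakOGD (T : ℕ) (R η ρ : ℝ) (g : E → ℝ) (v : ℕ → E → E) (s x : ℕ → E) : Prop where
  hasSubgradientAt : ∀ t ∈ Finset.Icc 1 T, HasSubgradientAt g (s t) (x t)
  update : ∀ t ∈ Finset.Icc 1 T, x (t + 1) = ballProj R
    (polyakStep (s t) (g (x t) + ⟪s t, x t - η • v t (x t) - x t⟫ + ρ) (x t - η • v t (x t)))

namespace IsPolyakOGD

variable {v : ℕ → E → E} {s : ℕ → E}

theorem norm_le (h : IsPolyakOGD T R η ρ g v s x) (hx : ‖x 1‖ ≤ R) :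
    ∀ t ∈ Finset.Icc 1 T, ‖x t‖ ≤ R := by
  intro t ht
  obtain ⟨ht₁, htT⟩ := Finset.mem_Icc.mp ht
  rcases ht₁.eq_or_lt with rfl | ht₁
  · exact hx
  obtain ⟨k, rfl⟩ := Nat.exists_eq_add_of_lt ht₁
  rw [h.update (1 + k) (Finset.mem_Icc.mpr (by omega))]
  exact norm_ballProj_le ((norm_nonneg _).trans hx) _

theorem norm_succ_sub_le (h : IsPolyakOGD T R η ρ g v s x) {u : E} (hu : ‖u‖ ≤ R)
    (hgu : g u ≤ -ρ) :
    ∀ t ∈ Finset.Icc 1 T, ‖x (t + 1) - u‖ ≤ ‖x t - η • v t (x t) - u‖ := by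
  intro t ht
  rw [h.update t ht]
  refine (norm_ballProj_sub_le hu _).trans (norm_polyakStep_sub_le ?_)
  set y := x t - η • v t (x t)
  have hsplit : ⟪s t, y - x t⟫ + ⟪s t, u - y⟫ = ⟪s t, u - x t⟫ := by
    rw [← inner_add_right, sub_add_sub_cancel']
  linarith [h.hasSubgradientAt t ht u]

theorem sum_sub_le_of_le_neg (h : IsPolyakOGD T R η ρ g v s x) (hη : 0 < η)
    (hf : ∀ t ∈ Finset.Icc 1 T, ∀ z ∈ Metric.closedBall (0 : E) R,
      HasSubgradientAt (f t) (v t z) z ∧ ‖v t z‖ ≤ G)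
    (hx : ‖x 1‖ ≤ R) {u : E} (hu : ‖u‖ ≤ R) (hgu : g u ≤ -ρ) :
    ∑ t ∈ Finset.Icc 1 T, (f t (x t) - f t u) ≤ 2 * R ^ 2 / η + η * G ^ 2 / 2 * T := by
  have hball : ∀ t ∈ Finset.Icc 1 T, x t ∈ Metric.closedBall (0 : E) R := fun t ht =>
    mem_closedBall_zero_iff.mpr (h.norm_le hx t ht)
  have hdiam : ‖x 1 - u‖ ≤ 2 * R := by linarith [norm_sub_le (x 1) u]
  calc ∑ t ∈ Finset.Icc 1 T, (f t (x t) - f t u)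
      ≤ ‖x 1 - u‖ ^ 2 / (2 * η) + η * G ^ 2 / 2 * T :=
        sum_sub_le_of_norm_sub_le hη (fun t ht => (hf t ht _ (hball t ht)).1)
          (fun t ht => (hf t ht _ (hball t ht)).2) (h.norm_succ_sub_le hu hgu)
    _ ≤ (2 * R) ^ 2 / (2 * η) + η * G ^ 2 / 2 * T := by gcongr
    _ = 2 * R ^ 2 / η + η * G ^ 2 / 2 * T := by field_simp

theorem sum_sub_le [CompleteSpace E] {ε σ : ℝ} (h : IsPolyakOGD T R η ρ g v s x) (hη : 0 < η)
    (hρ : 0 ≤ ρ) (hρε : ρ ≤ ε)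
    (hf : ∀ t ∈ Finset.Icc 1 T, ∀ z ∈ Metric.closedBall (0 : E) R,
      HasSubgradientAt (f t) (v t z) z ∧ ‖v t z‖ ≤ G)
    (hconv : ConvexOn ℝ Set.univ g) (hcont : Continuous g)
    (hgR : {z | g z ≤ 0} ⊆ Metric.closedBall 0 R) (hσ : 0 < σ) (hne : ∃ z, g z ≤ -ε)
    (hsub : ∀ z s, g z = -ε → HasSubgradientAt g s z → σ ≤ ‖s‖) (hx : ‖x 1‖ ≤ R)
    {w : E} (hw : g w ≤ 0) :
    ∑ t ∈ Finset.Icc 1 T, (f t (x t) - f t w) ≤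
      2 * R ^ 2 / η + η * G ^ 2 / 2 * T + G * (ρ / σ) * T := by
  obtain ⟨u, hgu, hdist⟩ :=
    exists_mem_sublevel_mul_norm_sub_le hconv hcont hne hsub (neg_le_neg hρε) w
  have huR : u ∈ Metric.closedBall (0 : E) R := hgR (show g u ≤ 0 by linarith)
  have huw : ‖u - w‖ ≤ ρ / σ := by
    rw [le_div_iff₀' hσ]
    exact hdist.trans (max_le (by linarith) hρ)
  have hshift : ∑ t ∈ Finset.Icc 1 T, (f t u - f t w) ≤ G * (ρ / σ) * T := calc
    _ ≤ ∑ _t ∈ Finset.Icc 1 T, G * (ρ / σ) := Finset.sum_le_sum fun t ht =>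
        ((hf t ht u huR).1.sub_le_mul_norm (hf t ht u huR).2 w).trans
          (mul_le_mul_of_nonneg_left huw ((norm_nonneg _).trans (hf t ht u huR).2))
    _ = G * (ρ / σ) * T := by
        rw [Finset.sum_const, Nat.card_Icc, Nat.add_sub_cancel, nsmul_eq_mul, mul_comm]
  calc ∑ t ∈ Finset.Icc 1 T, (f t (x t) - f t w)
      = ∑ t ∈ Finset.Icc 1 T, (f t (x t) - f t u) + ∑ t ∈ Finset.Icc 1 T, (f t u - f t w) := by
        rw [← Finset.sum_add_distrib]
        exact Finset.sum_congr rfl fun t _ => (sub_add_sub_cancel _ _ _).symm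
    _ ≤ _ := add_le_add
        (h.sum_sub_le_of_le_neg hη hf hx (mem_closedBall_zero_iff.mp huR) hgu) hshift

end IsPolyakOGD

end Regret

theorem one_sub_sqrt_one_sub_sq_div_sq_pos {a b : ℝ} (ha : a ≠ 0) (hb : b ≠ 0) :
    0 < 1 - √(1 - a ^ 2 / b ^ 2) := by
  have hratio : 0 < a ^ 2 / b ^ 2 := by positivity
  rw [sub_pos, Real.sqrt_lt' one_pos]
  linarith

theorem stmt3_general {E : Type*} [NormedAddCommGroup E] [InnerProductSpace ℝ E] [CompleteSpace E]
    {T : ℕ} (hT : 1 ≤ T) {R Gf Gg ε σ α ξ : ℝ} {g : E → ℝ} {f : ℕ → E → ℝ} {v : ℕ → E → E}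
    {s x : ℕ → E} (hGf : 0 < Gf) (hGg : 0 < Gg) (hσ : 0 < σ) (hα : 0 < α) (hαε : α ≤ ε)
    (hξ : 0 < ξ) (hconv : ConvexOn ℝ Set.univ g) (hcont : Continuous g)
    (hgR : {z | g z ≤ 0} ⊆ Metric.closedBall 0 R)
    (hf : ∀ t ∈ Finset.Icc 1 T, ∀ z ∈ Metric.closedBall (0 : E) R,
      HasSubgradientAt (f t) (v t z) z ∧ ‖v t z‖ ≤ Gf)
    (hne : ∃ z, g z ≤ -ε) (hsub : ∀ z s, g z = -ε → HasSubgradientAt g s z → σ ≤ ‖s‖)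
    (hx : ‖x 1‖ ≤ R)
    (hrun : IsPolyakOGD T R (ξ * (α / √T) / (Gf * Gg)) (α / √T) g v s x) {w : E} (hw : g w ≤ 0) :
    ∑ t ∈ Finset.Icc 1 T, (f t (x t) - f t w) ≤
      (2 * Gf * Gg * R ^ 2 / (ξ * α) + Gf * ξ * α / (2 * Gg) + Gf * α / σ) * √T := by
  have hsqrt : 1 ≤ √(T : ℝ) := Real.one_le_sqrt.mpr (by exact_mod_cast hT)
  have hsqrt_pos : 0 < √(T : ℝ) := one_pos.trans_le hsqrt
  have hρε : α / √T ≤ ε := (div_le_self hα.le hsqrt).trans hαε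
  refine (hrun.sum_sub_le (by positivity) (by positivity) hρε hf hconv hcont hgR hσ hne hsub
    hx hw).trans_eq ?_
  set q := √(T : ℝ)
  rw [show (T : ℝ) = q ^ 2 from (Real.sq_sqrt T.cast_nonneg).symm]
  field_simp

theorem stmt3 {d T : ℕ} (hT : 1 ≤ T)
    {R Gf Gg ε σ η ρ α : ℝ}
    (g : EuclideanSpace ℝ (Fin d) → ℝ)
    (f : ℕ → EuclideanSpace ℝ (Fin d) → ℝ)
    (x y s : ℕ → EuclideanSpace ℝ (Fin d))
    (hR : 0 < R) (hGf : 0 < Gf) (hGg : 0 < Gg)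
    (hgconv : ConvexOn ℝ Set.univ g)
    (hA1 : {z : EuclideanSpace ℝ (Fin d) | g z ≤ 0} ⊆ Metric.closedBall 0 R)
    (hfconv : ∀ t ∈ Finset.Icc 1 T, ConvexOn ℝ Set.univ (f t))
    (hfdiff : ∀ t ∈ Finset.Icc 1 T, Differentiable ℝ (f t))
    (hA2 : ∀ t ∈ Finset.Icc 1 T, ∀ z ∈ Metric.closedBall (0 : EuclideanSpace ℝ (Fin d)) R,
      ‖gradient (f t) z‖ ≤ Gf)
    (hA3 : ∀ z ∈ Metric.closedBall (0 : EuclideanSpace ℝ (Fin d)) R,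
      ∀ sz, IsSubgradAt g z sz → ‖sz‖ ≤ Gg)
    (hσ : 0 < σ) (hε : 0 < ε) (hσGg : σ ≤ Gg)
    (hA4ne : ∃ z, g z = -ε)
    (hA4 : ∀ z : EuclideanSpace ℝ (Fin d), g z = -ε → ∀ sz, IsSubgradAt g z sz → σ ≤ ‖sz‖)
    (hα : 0 < α) (hαε : α ≤ ε)
    (hx1g : g (x 1) ≤ -α)
    (hρdef : ρ = α / Real.sqrt T)
    (hηdef : η = (1 - Real.sqrt (1 - σ ^ 2 / Gg ^ 2)) * ρ / (Gf * Gg))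
    (hs : ∀ t ∈ Finset.Icc 1 T, IsSubgradAt g (x t) (s t))
    (hy : ∀ t ∈ Finset.Icc 1 T, y t = x t - η • gradient (f t) (x t))
    (hupd : ∀ t ∈ Finset.Icc 1 T,
      x (t + 1) = if s t ≠ 0 then
          projBall R (y t - ((max (g (x t) + ⟪s t, y t - x t⟫ + ρ) 0) / ‖s t‖ ^ 2) • s t)
        else projBall R (y t))
    :
    ∀ xstar : EuclideanSpace ℝ (Fin d), g xstar ≤ 0 →
      ∑ t ∈ Finset.Icc 1 T, (f t (x t) - f t xstar) ≤
        (2 * Gf * Gg * R ^ 2 / ((1 - Real.sqrt (1 - σ ^ 2 / Gg ^ 2)) * α) +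
          Gf * (1 - Real.sqrt (1 - σ ^ 2 / Gg ^ 2)) * α / (2 * Gg) +
          Gf * α / σ) * Real.sqrt T := by
  intro xstar hxstar
  have hrun : IsPolyakOGD T R η ρ g (fun t => gradient (f t)) s x := by
    refine ⟨hs, fun t ht => ?_⟩
    rw [hupd t ht, hy t ht]
    split_ifs with hst
    · rfl
    · rw [not_not.mp hst, polyakStep_zero_left]
      rfl
  have hgrad : ∀ t ∈ Finset.Icc 1 T, ∀ z ∈ Metric.closedBall (0 : EuclideanSpace ℝ (Fin d)) R,
      HasSubgradientAt (f t) (gradient (f t) z) z ∧ ‖gradient (f t) z‖ ≤ Gf := fun t ht z hz =>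
    ⟨hasSubgradientAt_of_hasGradientAt (hfconv t ht) (hfdiff t ht z).hasGradientAt, hA2 t ht z hz⟩
  have hgcont : Continuous g := continuousOn_univ.mp (hgconv.continuousOn isOpen_univ)
  have hx1 : ‖x 1‖ ≤ R := mem_closedBall_zero_iff.mp (hA1 (hx1g.trans (neg_nonpos.mpr hα.le)))
  subst hηdef hρdef
  exact stmt3_general hT hGf hGg hσ hα hαε (one_sub_sqrt_one_sub_sq_div_sq_pos hσ.ne' hGg.ne')
    hgconv hgcont hA1 hgrad (hA4ne.imp fun _ => le_of_eq) (fun z sz hz => hA4 z hz sz) hx1 hrun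
    hxstar
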